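/- arXiv:1810.08863 — 2 statements merged into one kernel-verified Lean document; each statement's English description precedes it below -/
import Mathlib

section
/- (Gelin-Cesàro identity for third-order Jacobsthal numbers) For every natural number n ≥ 2, the following identity of rational numbers holds: (J_n)⁴ − J_{n−2}·J_{n−1}·J_{n+1}·J_{n+2} = (1/7)·( (J_n)²·( 2 + 2^{n−1}·(3·W_{n+2} − 2·W_{n+1}) ) − (1/7)·( 1 + 2^{n−1}·(3·W_{n+2} − 2·W_{n+1}) − 3·2^{2n−1}·W_{n+1}·W_{n+2} ) ), where W_{n+2} = (5·V_{n+1} − 3·V_n)/7. -/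
/-!
The characteristic polynomial of `J3` is `(x - 2)(x² + x + 1)`, which yields the closed form
`7 J_n = 2^(n+1) - V_n`. The sequence `V` has period 3, with values `2, -3, 1`, so for each
residue of `n` modulo 3 both sides become polynomials in a power of 2, and they agree.
-/

/-- The third-order Jacobsthal sequence. -/
def J3 : ℕ → ℤ
  | 0 => 0
  | 1 => 1
  | 2 => 1
  | n + 3 => J3 (n + 2) + J3 (n + 1) + 2 * J3 n

/-- The third-order Jacobsthal-Lucas sequence. -/
def j3 : ℕ → ℤ
  | 0 => 2
  | 1 => 1
  | 2 => 5
  | n + 3 => j3 (n + 2) + j3 (n + 1) + 2 * j3 n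

/-- The sequence V with V 0 = 2, V 1 = -3, V (n+2) = -V (n+1) - V n. -/
def V3 : ℕ → ℤ
  | 0 => 2
  | 1 => -3
  | n + 2 => -V3 (n + 1) - V3 n

lemma seven_mul_J3 (n : ℕ) : 7 * J3 n = 2 ^ (n + 1) - V3 n := by
  induction n using J3.induct with
  | case1 => simp [J3, V3]
  | case2 => simp [J3, V3]
  | case3 => simp [J3, V3]
  | case4 n h2 h1 h0 =>
    have e3 : V3 (n + 3) = -V3 (n + 2) - V3 (n + 1) := by rw [V3]
    have e2 : V3 (n + 2) = -V3 (n + 1) - V3 n := by rw [V3]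
    change 7 * J3 (n + 3) = 2 ^ (n + 3 + 1) - V3 (n + 3)
    rw [J3, e3]
    rw [e2] at h2 ⊢
    ring_nf at *
    linarith

/-- `V` has period 3, so consecutive pairs take only three values. -/
lemma V3_pair (n : ℕ) : (V3 n = 2 ∧ V3 (n + 1) = -3) ∨ (V3 n = -3 ∧ V3 (n + 1) = 1) ∨
    (V3 n = 1 ∧ V3 (n + 1) = 2) := by
  induction n with
  | zero => simp [V3]
  | succ n ih =>
    have e2 : V3 (n + 2) = -V3 (n + 1) - V3 n := by rw [V3]
    rw [show n + 1 + 1 = n + 2 from rfl]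
    omega

theorem stmt_13 (n : ℕ) (hn : 2 ≤ n) (W1 W2 : ℚ)
    (hW1 : 7 * W1 = 5 * (V3 n : ℚ) - 3 * (V3 (n - 1) : ℚ))
    (hW2 : 7 * W2 = 5 * (V3 (n + 1) : ℚ) - 3 * (V3 n : ℚ)) :
    ((J3 n : ℚ)) ^ 4 -
        (J3 (n - 2) : ℚ) * (J3 (n - 1) : ℚ) * (J3 (n + 1) : ℚ) * (J3 (n + 2) : ℚ) =
      (1 / 7) * ((J3 n : ℚ) ^ 2 * (2 + (2 : ℚ) ^ (n - 1) * (3 * W2 - 2 * W1)) -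
        (1 / 7) * (1 + (2 : ℚ) ^ (n - 1) * (3 * W2 - 2 * W1) -
          3 * (2 : ℚ) ^ (2 * n - 1) * W1 * W2)) := by
  -- With `n = m + 2`, no truncated subtraction remains.
  obtain ⟨m, rfl⟩ := Nat.exists_eq_add_of_le' hn
  rw [show m + 2 - 1 = m + 1 by omega, show m + 2 - 2 = m by omega,
    show 2 * (m + 2) - 1 = 2 * m + 3 by omega] at *
  have closed (k : ℕ) : (J3 k : ℚ) = (2 ^ (k + 1) - (V3 k : ℚ)) / 7 := by
    have h : (7 : ℚ) * J3 k = 2 ^ (k + 1) - V3 k := by exact_mod_cast seven_mul_J3 k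
    linarith
  have e2 : V3 (m + 2) = -V3 (m + 1) - V3 m := by rw [V3]
  have e3 : V3 (m + 2 + 1) = -V3 (m + 2) - V3 (m + 1) := by rw [V3]
  have e4 : V3 (m + 2 + 2) = -V3 (m + 2 + 1) - V3 (m + 2) := by rw [V3]
  rw [closed, closed, closed, closed, closed]
  rcases V3_pair m with ⟨h0, h1⟩ | ⟨h0, h1⟩ | ⟨h0, h1⟩ <;>
  · rw [h0, h1] at e2
    rw [e2, h1] at e3
    rw [e3, e2] at e4
    rw [e2, h1] at hW1
    rw [e3, e2] at hW2
    push_cast at hW1 hW2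
    obtain rfl := eq_div_of_mul_eq (by norm_num) ((mul_comm _ _).trans hW1)
    obtain rfl := eq_div_of_mul_eq (by norm_num) ((mul_comm _ _).trans hW2)
    rw [h0, h1, e2, e3, e4]
    push_cast
    ring
end

section
/- (Catalan identity for the generalized third-order Jacobsthal sequence) Let a, b, c be real numbers, (𝕁_n) the generalized third-order Jacobsthal sequence with parameters a, b, c, ρ = a + b + c, and (𝕍_n) the real sequence defined by 𝕍_0 = c + b − 6a, 𝕍_1 = 2c − 5b + 2a and 𝕍_{n+2} = −𝕍_{n+1} − 𝕍_n. Then for all natural numbers n and r with n ≥ r and r ≥ 1: (𝕁_n)² − 𝕁_{n−r}·𝕁_{n+r} = (1/49)·( 2^n·ρ·( 2^r·𝕍_{n−r} − 2·𝕍_n + 2^{−r}·𝕍_{n+r} ) + 7·(4a² + 3b² + c² − 2ac − 3bc)·(U_r)² ), where U_r = j_{r−1} − J_{r+1} with (J_n) and (j_n) the third-order Jacobsthal and third-order Jacobsthal-Lucas sequences. -/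
lemma period_three {R : Type*} [CommRing R] (V : ℕ → R)
    (hV : ∀ n, V (n + 2) = -V (n + 1) - V n) (n q : ℕ) : V (n + 3 * q) = V n := by
  induction q with
  | zero => rfl
  | succ q ih =>
    have e1 := hV (n + 3 * q)
    have e2 := hV (n + 3 * q + 1)
    rw [show n + 3 * (q + 1) = n + 3 * q + 1 + 2 by ring, e2, ← ih,
      show n + 3 * q + 1 + 1 = n + 3 * q + 2 by ring, e1]
    ring

lemma quad_invariant (V : ℕ → ℝ) (hV : ∀ n, V (n + 2) = -V (n + 1) - V n) (n : ℕ) :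
    V n ^ 2 + V n * V (n + 1) + V (n + 1) ^ 2 = V 0 ^ 2 + V 0 * V 1 + V 1 ^ 2 := by
  induction n with
  | zero => rfl
  | succ n ih =>
    rw [← ih, show n + 1 + 1 = n + 2 by ring, hV n]
    ring

lemma seven_mul_jacobsthal (a b c : ℝ) (Jg : ℕ → ℝ)
    (h0 : Jg 0 = a) (h1 : Jg 1 = b) (h2 : Jg 2 = c)
    (hrec : ∀ n : ℕ, Jg (n + 3) = Jg (n + 2) + Jg (n + 1) + 2 * Jg n)
    (V : ℕ → ℝ) (hV0 : V 0 = c + b - 6 * a) (hV1 : V 1 = 2 * c - 5 * b + 2 * a)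
    (hVrec : ∀ n : ℕ, V (n + 2) = -V (n + 1) - V n) (n : ℕ) :
    7 * Jg n = 2 ^ n * (a + b + c) - V n := by
  suffices h : 7 * Jg n = 2 ^ n * (a + b + c) - V n ∧
      7 * Jg (n + 1) = 2 ^ (n + 1) * (a + b + c) - V (n + 1) ∧
      7 * Jg (n + 2) = 2 ^ (n + 2) * (a + b + c) - V (n + 2) from h.1
  induction n with
  | zero =>
    have := hVrec 0
    simp only [zero_add] at *
    rw [this, h0, h1, h2, hV0, hV1]
    refine ⟨?_, ?_, ?_⟩ <;> ring
  | succ n ih =>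
    obtain ⟨i0, i1, i2⟩ := ih
    refine ⟨i1, i2, ?_⟩
    have e0 := hVrec n
    have e1 := hVrec (n + 1)
    have e := hrec n
    simp only [add_assoc, Nat.reduceAdd, pow_add] at *
    linarith

/-- The sequence `k ↦ U_{k+1} = j_k - J_{k+2}` loses the factor `x - 2` of the characteristic
polynomial: `U_{k+2} + U_{k+1} + U_k` doubles at each step and starts at `0`. -/
lemma lucas_sub_rec (k : ℕ) :
    j3 (k + 2) - J3 (k + 4) = -(j3 (k + 1) - J3 (k + 3)) - (j3 k - J3 (k + 2)) := by
  induction k with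
  | zero => simp [j3, J3]
  | succ k ih =>
    have e1 : j3 (k + 3) = j3 (k + 2) + j3 (k + 1) + 2 * j3 k := rfl
    have e2 : J3 (k + 5) = J3 (k + 4) + J3 (k + 3) + 2 * J3 (k + 2) := rfl
    simp only [add_assoc, Nat.reduceAdd] at *
    linarith

lemma sq_sub_mul_eq (V : ℕ → ℝ) (hV : ∀ n, V (n + 2) = -V (n + 1) - V n) (m k : ℕ) :
    V (m + (k + 1)) ^ 2 - V m * V (m + (k + 1) + (k + 1)) =
      (V 0 ^ 2 + V 0 * V 1 + V 1 ^ 2) * ((j3 k : ℝ) - (J3 (k + 2) : ℝ)) ^ 2 := by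
  have hU : ∀ s q, j3 (s + 3 * q) - J3 (s + 3 * q + 2) = j3 s - J3 (s + 2) :=
    period_three (fun k => j3 k - J3 (k + 2)) lucas_sub_rec
  rw [← quad_invariant V hV m]
  have hlt := Nat.mod_lt k (show 0 < 3 by norm_num)
  have hk := Nat.mod_add_div k 3
  generalize k % 3 = s at *
  generalize k / 3 = q at *
  subst hk
  have hUr : ((j3 (s + 3 * q) : ℝ) - (J3 (s + 3 * q + 2) : ℝ)) = ((j3 s - J3 (s + 2) : ℤ) : ℝ) := by
    rw [← hU s q]; push_cast; rfl
  rw [hUr, show m + (s + 3 * q + 1) + (s + 3 * q + 1) = m + 2 * s + 2 + 3 * (2 * q) by ring,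
    show m + (s + 3 * q + 1) = m + s + 1 + 3 * q by ring, period_three V hV, period_three V hV]
  have e0 := hV m
  have e3 := period_three V hV m 1
  have e4 := period_three V hV (m + 1) 1
  have e6 := period_three V hV m 2
  interval_cases s <;> simp only [add_assoc, Nat.reduceAdd, Nat.reduceMul] at * <;>
    simp [j3, J3, e0, e3, e4, e6] <;> ring

theorem stmt_18 (a b c : ℝ) (Jg : ℕ → ℝ)
    (h0 : Jg 0 = a) (h1 : Jg 1 = b) (h2 : Jg 2 = c)
    (hrec : ∀ n : ℕ, Jg (n + 3) = Jg (n + 2) + Jg (n + 1) + 2 * Jg n)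
    (V : ℕ → ℝ) (hV0 : V 0 = c + b - 6 * a) (hV1 : V 1 = 2 * c - 5 * b + 2 * a)
    (hVrec : ∀ n : ℕ, V (n + 2) = -V (n + 1) - V n)
    (n r : ℕ) (hrn : r ≤ n) (hr : 1 ≤ r) :
    (Jg n) ^ 2 - Jg (n - r) * Jg (n + r) =
      (1 / 49) * ((2 : ℝ) ^ n * (a + b + c) *
          ((2 : ℝ) ^ r * V (n - r) - 2 * V n + (2 : ℝ) ^ (-(r : ℤ)) * V (n + r)) +
        7 * (4 * a ^ 2 + 3 * b ^ 2 + c ^ 2 - 2 * a * c - 3 * b * c) *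
          ((j3 (r - 1) : ℝ) - (J3 (r + 1) : ℝ)) ^ 2) := by
  obtain ⟨k, rfl⟩ : ∃ k, r = k + 1 := ⟨r - 1, by omega⟩
  obtain ⟨m, rfl⟩ : ∃ m, n = m + (k + 1) := ⟨n - (k + 1), by omega⟩
  have hJ : ∀ i, Jg i = (2 ^ i * (a + b + c) - V i) / 7 := fun i => by
    have := seven_mul_jacobsthal a b c Jg h0 h1 h2 hrec V hV0 hV1 hVrec i
    linarith
  have hQ := sq_sub_mul_eq V hVrec m k
  have hV : V 0 ^ 2 + V 0 * V 1 + V 1 ^ 2 =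
      7 * (4 * a ^ 2 + 3 * b ^ 2 + c ^ 2 - 2 * a * c - 3 * b * c) := by
    rw [hV0, hV1]; ring
  rw [hV] at hQ
  rw [Nat.add_sub_cancel, Nat.add_sub_cancel, show k + 1 + 1 = k + 2 from rfl, ← hQ,
    hJ, hJ, hJ, zpow_neg, zpow_natCast]
  simp only [pow_add _ m, pow_add _ (m + (k + 1))]
  have hp : (2 : ℝ) ^ (k + 1) ≠ 0 := by positivity
  generalize (2 : ℝ) ^ (k + 1) = p at *
  field_simp
  ring
end
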